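/- Let c_1 < c_2 < c_3 < ... be the increasing enumeration of the cyclic numbers and, for positive real x, let C(x) denote the number of cyclic numbers ≤ x. Then x / c_{C(x)} tends to 1 as x → ∞ (here c_{C(x)} is the largest cyclic number not exceeding x). -/

import Mathlib

open Filter Asymptotics Real

/-- A positive integer `n` is *cyclic* if `gcd(n, φ(n)) = 1`. -/
def IsCyclicNum (n : ℕ) : Prop := 0 < n ∧ Nat.gcd n (Nat.totient n) = 1

instance : DecidablePred IsCyclicNum := fun n =>
  decidable_of_iff (0 < n ∧ Nat.gcd n (Nat.totient n) = 1) Iff.rfl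

/-- The `n`-th cyclic number, indexed from 1: `cyclicNum 1 = 1`, `cyclicNum 2 = 2`, .... -/
noncomputable def cyclicNum (n : ℕ) : ℕ := Nat.nth IsCyclicNum (n - 1)

/-- The number of cyclic numbers less than or equal to the real number `x`. -/
noncomputable def cyclicCount (x : ℝ) : ℕ :=
  ((Finset.range (⌊x⌋₊ + 1)).filter IsCyclicNum).card


theorem aux_legendre (S : Finset ℕ) : (∀ p ∈ S, p.Prime) → ∀ t : ℝ, 0 ≤ t →
    |(((Finset.Ioc 0 ⌊t⌋₊).filter (fun n => ∀ p ∈ S, ¬ p ∣ n)).card : ℝ)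
      - t * ∏ p ∈ S, (1 - 1 / (p:ℝ))| ≤ 2 ^ S.card := by
  classical
  induction S using Finset.induction_on with
  | empty =>
    intro _ t ht
    simp
    rw [abs_le]
    constructor
    · linarith [Nat.lt_floor_add_one t]
    · linarith [Nat.floor_le ht]
  | insert q S hq ih =>
    intro hS t ht
    have hqp : q.Prime := hS q (by simp)
    have hq0 : (0:ℝ) < q := by exact_mod_cast hqp.pos
    have hS' : ∀ p ∈ S, p.Prime := fun p hp => hS p (by simp [hp])
    have h1 := ih hS' t ht
    have h2 := ih hS' (t / q) (by positivity)
    have key : ((Finset.Ioc 0 ⌊t⌋₊).filter (fun n => ∀ p ∈ S, ¬ p ∣ n)).card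
        = ((Finset.Ioc 0 ⌊t⌋₊).filter (fun n => ∀ p ∈ insert q S, ¬ p ∣ n)).card
        + ((Finset.Ioc 0 ⌊t / q⌋₊).filter (fun n => ∀ p ∈ S, ¬ p ∣ n)).card := by
      rw [← Finset.card_filter_add_card_filter_not (fun n => ¬ q ∣ n), Finset.filter_filter,
        Finset.filter_filter]
      congr 1
      · congr 1
        apply Finset.filter_congr
        intro n _
        simp [and_comm]
      · symm
        apply Finset.card_bij (fun m _ => q * m)
        · intro m hm
          simp only [Finset.mem_filter, Finset.mem_Ioc, not_not] at hm ⊢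
          obtain ⟨⟨hm1, hm2⟩, hm3⟩ := hm
          refine ⟨⟨Nat.mul_pos hqp.pos hm1, ?_⟩, ?_, dvd_mul_right _ _⟩
          · rw [Nat.floor_div_natCast] at hm2
            rw [mul_comm]
            exact (Nat.le_div_iff_mul_le hqp.pos).1 hm2
          · intro p hp hd
            rcases (hS' p hp).dvd_mul.1 hd with h | h
            · rw [Nat.prime_dvd_prime_iff_eq (hS' p hp) hqp] at h
              exact hq (h ▸ hp)
            · exact hm3 p hp h
        · intro a _ b _ h
          exact Nat.eq_of_mul_eq_mul_left hqp.pos h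
        · intro n hn
          simp only [Finset.mem_filter, Finset.mem_Ioc, not_not] at hn
          obtain ⟨⟨hn1, hn2⟩, hn3, m, rfl⟩ := hn
          refine ⟨m, ?_, rfl⟩
          simp only [Finset.mem_filter, Finset.mem_Ioc]
          refine ⟨⟨Nat.pos_of_mul_pos_left hn1, ?_⟩, fun p hp h => hn3 p hp (h.mul_left _)⟩
          rw [Nat.floor_div_natCast, Nat.le_div_iff_mul_le hqp.pos, mul_comm]
          exact hn2
    have key' : (((Finset.Ioc 0 ⌊t⌋₊).filter (fun n => ∀ p ∈ S, ¬ p ∣ n)).card : ℝ)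
        = (((Finset.Ioc 0 ⌊t⌋₊).filter (fun n => ∀ p ∈ insert q S, ¬ p ∣ n)).card : ℝ)
        + (((Finset.Ioc 0 ⌊t / q⌋₊).filter (fun n => ∀ p ∈ S, ¬ p ∣ n)).card : ℝ) := by
      exact_mod_cast key
    rw [Finset.prod_insert hq, Finset.card_insert_of_notMem hq, pow_succ]
    have e : t * ((1 - 1 / (q:ℝ)) * ∏ p ∈ S, (1 - 1 / (p:ℝ)))
      = t * ∏ p ∈ S, (1 - 1 / (p:ℝ)) - t / q * ∏ p ∈ S, (1 - 1 / (p:ℝ)) := by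
      field_simp
    rw [e]
    rw [abs_le] at *
    constructor <;> linarith

theorem aux_logsum (n : ℕ) (hn : 1 ≤ n) :
    ∑ p ∈ Nat.primesLE n, Real.log p / p ≤ Real.log n + Real.log 4 := by
  have hn0 : (0:ℝ) < n := by exact_mod_cast hn
  have h1 : ∑ p ∈ Nat.primesLE n, Real.log p * ((n / p : ℕ) : ℝ) ≤ n * Real.log n := by
    calc ∑ p ∈ Nat.primesLE n, Real.log p * ((n / p : ℕ) : ℝ)
        = ∑ p ∈ Nat.primesLE n, ∑ m ∈ Finset.Ioc 0 n, if p ∣ m then Real.log p else 0 := by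
          apply Finset.sum_congr rfl
          intro p _
          rw [← Finset.sum_filter, Finset.sum_const, Nat.Ioc_filter_dvd_card_eq_div, nsmul_eq_mul,
            mul_comm]
      _ = ∑ m ∈ Finset.Ioc 0 n, ∑ p ∈ Nat.primesLE n, if p ∣ m then Real.log p else 0 :=
          Finset.sum_comm
      _ ≤ ∑ m ∈ Finset.Ioc 0 n, Real.log n := by
          apply Finset.sum_le_sum
          intro m hm
          rw [Finset.mem_Ioc] at hm
          rw [← Finset.sum_filter]
          calc ∑ p ∈ (Nat.primesLE n).filter (fun p => p ∣ m), Real.log p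
              = ∑ p ∈ m.primeFactors, Real.log p := by
                apply Finset.sum_congr _ (fun _ _ => rfl)
                ext p
                simp only [Finset.mem_filter, Nat.mem_primesLE, Nat.mem_primeFactors]
                constructor
                · rintro ⟨⟨_, h⟩, h'⟩
                  exact ⟨h, h', by omega⟩
                · rintro ⟨h, h', _⟩
                  exact ⟨⟨(Nat.le_of_dvd hm.1 h').trans hm.2, h⟩, h'⟩
            _ = Real.log ((∏ p ∈ m.primeFactors, p : ℕ) : ℝ) := by
                rw [Nat.cast_prod, Real.log_prod]
                intro p hp
                exact_mod_cast (Nat.prime_of_mem_primeFactors hp).ne_zero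
            _ ≤ Real.log n := by
                apply Real.log_le_log
                · exact_mod_cast Finset.prod_pos
                    (fun p hp => (Nat.prime_of_mem_primeFactors hp).pos)
                · exact_mod_cast (Nat.le_of_dvd hm.1 (Nat.prod_primeFactors_dvd m)).trans hm.2
      _ = n * Real.log n := by simp
  have h2 : Chebyshev.theta n ≤ Real.log 4 * n := Chebyshev.theta_le_log4_mul_x hn0.le
  rw [Chebyshev.theta_eq_sum_primesLE_log] at h2
  have h3 : n * ∑ p ∈ Nat.primesLE n, Real.log p / p ≤ 
     ∑ p ∈ Nat.primesLE n, Real.log p * ((n / p : ℕ) : ℝ) + ∑ p ∈ Nat.primesLE n, Real.log p := by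
    rw [Finset.mul_sum, ← Finset.sum_add_distrib]
    apply Finset.sum_le_sum
    intro p hp
    have hlog : 0 ≤ Real.log p := Real.log_natCast_nonneg p
    have : (n:ℝ) / p ≤ ((n / p : ℕ) : ℝ) + 1 := by
      rw [← Nat.floor_div_eq_div (K := ℝ)]
      exact (Nat.lt_floor_add_one _).le
    calc (n:ℝ) * (Real.log p / p) = Real.log p * (n / p) := by ring
      _ ≤ Real.log p * (((n / p : ℕ) : ℝ) + 1) := by gcongr
      _ = _ := by ring
  have : n * ∑ p ∈ Nat.primesLE n, Real.log p / p ≤ n * (Real.log n + Real.log 4) := by linarith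
  exact le_of_mul_le_mul_left this hn0

theorem aux_sqsum (y : ℕ) (hy : 2 ≤ y) (N : ℕ) :
    ∑ p ∈ (Finset.Ioc y N).filter Nat.Prime, 1 / (p:ℝ)^2 ≤ 2 * Real.log 4 / (y * Real.log y) := by
  have hy0 : (0:ℝ) < y := by positivity
  have hK : 0 < Real.log 4 := Real.log_pos (by norm_num)
  have hly : 0 < Real.log y := Real.log_pos (by exact_mod_cast hy)
  have main : ∀ N : ℕ, y ≤ N → ∑ p ∈ (Finset.Ioc y N).filter Nat.Prime, Real.log p / (p:ℝ)^2 ≤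
      Chebyshev.theta N / (N:ℝ)^2 + 2 * Real.log 4 * (1 / y - 1 / N) := by
    intro N hN
    induction N, hN using Nat.le_induction with
    | base => 
      simp
      have := Chebyshev.theta_nonneg y
      positivity
    | succ N hN ih =>
      have hN0 : (0:ℝ) < N := by exact_mod_cast (by omega : 0 < N)
      have hth : Chebyshev.theta ((N+1 : ℕ):ℝ) = Chebyshev.theta N + 
          if (N+1).Prime then Real.log ((N+1:ℕ):ℝ) else 0 := by
        simp only [Chebyshev.theta, Nat.floor_natCast, Finset.sum_filter]
        rw [Finset.sum_Ioc_succ_top (by simp)]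
      have hs : ∑ p ∈ (Finset.Ioc y (N+1)).filter Nat.Prime, Real.log p / (p:ℝ)^2
         = ∑ p ∈ (Finset.Ioc y N).filter Nat.Prime, Real.log p / (p:ℝ)^2 + 
          if (N+1).Prime then Real.log ((N+1:ℕ):ℝ) / ((N+1:ℕ):ℝ)^2 else 0 := by
        simp only [Finset.sum_filter]
        rw [Finset.sum_Ioc_succ_top (by simpa using hN)]
      have hb := Chebyshev.theta_le_log4_mul_x hN0.le
      have hd : Chebyshev.theta N * (1 / (N:ℝ)^2 - 1 / (N+1:ℝ)^2)
          ≤ 2 * Real.log 4 * (1 / (N:ℝ) - 1 / (N+1)) := by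
        have e1 : 1 / (N:ℝ)^2 - 1 / (N+1:ℝ)^2 = (2*N+1) / (N^2*(N+1)^2) := by
          field_simp; ring
        have e2 : 1 / (N:ℝ) - 1 / (N+1:ℝ) = 1 / (N*(N+1)) := by
          field_simp; ring
        rw [e1, e2]
        calc Chebyshev.theta N * ((2*N+1) / (N^2*(N+1)^2)) 
            ≤ (Real.log 4 * N) * ((2*N+1) / (N^2*(N+1)^2)) := by gcongr
          _ ≤ (Real.log 4 * N) * ((2*N+2) / (N^2*(N+1)^2)) := by gcongr; norm_num
          _ = _ := by field_simp
      rw [hs, hth]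
      push_cast
      have e3 : (if (N+1).Prime then Real.log ((N:ℝ)+1) / ((N:ℝ)+1)^2 else 0)
         = (if (N+1).Prime then Real.log ((N:ℝ)+1) else 0) / ((N:ℝ)+1)^2 := by
        split_ifs <;> simp
      rw [e3, add_div]
      have e4 : Chebyshev.theta N * (1 / (N:ℝ)^2 - 1 / (N+1:ℝ)^2) 
        = Chebyshev.theta N / (N:ℝ)^2 - Chebyshev.theta N / (N+1:ℝ)^2 := by ring
      linarith
  rcases lt_or_ge N y with h | h
  · rw [Finset.Ioc_eq_empty (by omega)]
    simp
    positivity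
  have hN0 : (0:ℝ) < N := by exact_mod_cast (by omega : 0 < N)
  have h1 := main N h
  have h2 : Chebyshev.theta N / (N:ℝ)^2 ≤ Real.log 4 / N := by
    have hb := Chebyshev.theta_le_log4_mul_x hN0.le
    rw [div_le_div_iff₀ (by positivity) hN0]
    nlinarith
  have h3 : ∑ p ∈ (Finset.Ioc y N).filter Nat.Prime, Real.log p / (p:ℝ)^2 ≤ 2 * Real.log 4 / y := by
    have : 0 < Real.log 4 / N := by positivity
    have e : 2 * Real.log 4 * (1 / (y:ℝ) - 1 / N) = 2 * Real.log 4 / y - 2 * (Real.log 4 / N) := by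
      ring
    linarith
  have h4 : Real.log y * ∑ p ∈ (Finset.Ioc y N).filter Nat.Prime, 1 / (p:ℝ)^2 ≤ 
    ∑ p ∈ (Finset.Ioc y N).filter Nat.Prime, Real.log p / (p:ℝ)^2 := by
    rw [Finset.mul_sum]
    apply Finset.sum_le_sum
    intro p hp
    simp only [Finset.mem_filter, Finset.mem_Ioc] at hp
    rw [mul_one_div]
    gcongr
    exact hp.1.1.le
  rw [← div_div, le_div_iff₀ hly]
  linarith

theorem aux_mertens (y : ℕ) (hy : 2 ≤ y) :
    (Real.exp (-6) / 3) / Real.log y ≤ ∏ p ∈ Nat.primesLE y, (1 - 1 / (p:ℝ)) := by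
  have hl2 : (1:ℝ)/2 ≤ Real.log y := by
    have h1 : Real.log 2 ≤ Real.log y := Real.log_le_log (by norm_num) (by exact_mod_cast hy)
    linarith [Real.log_two_gt_d9]
  have hl : 0 < Real.log y := by linarith
  set δ : ℝ := 1 / Real.log y with hδ
  have hδ0 : 0 < δ := by positivity
  set s : ℝ := 1 + δ with hs
  have hs1 : 1 < s := by linarith
  let f : ℕ →* ℝ :=
    { toFun := fun n => (n:ℝ) ^ (-s)
      map_one' := by simp
      map_mul' := fun a b => by
        push_cast
        exact Real.mul_rpow (by positivity) (by positivity) }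
  have hf : ∀ n : ℕ, f n = (n:ℝ) ^ (-s) := fun n => rfl
  have hfs : Summable f := by
    have : Summable (fun n : ℕ => (n:ℝ) ^ (-s)) := Real.summable_nat_rpow.2 (by linarith)
    exact this
  have hprod : ∏ p ∈ Nat.primesLE y, (1 - f p)⁻¹ ≤ 1 + Real.log y := by
    have h1 := EulerProduct.prod_primesBelow_geometric_eq_tsum_smoothNumbers hfs (y+1)
    have h2 : ∑' m : (y+1).smoothNumbers, f m ≤ ∑' n, f n := by
      apply Summable.tsum_subtype_le f _ _ hfs
      intro n
      rw [hf]
      positivity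
    have h3 : ∑' n, f n = ∑' n : ℕ, 1 / (n + 1 : ℝ) ^ s := by
      rw [hfs.tsum_eq_zero_add]
      have : f 0 = 0 := by
        rw [hf]
        simp
        exact Real.zero_rpow (by linarith)
      rw [this, zero_add]
      congr 1
      ext n
      rw [hf, Real.rpow_neg (by positivity)]
      simp
    have h4 := ZetaAsymptotics.zeta_limit_aux1 hs1
    have h5 : 0 ≤ ZetaAsymptotics.termTSum s := tsum_nonneg (fun n => ZetaAsymptotics.term_nonneg _ _)
    have h6 : 1 / (s - 1) = Real.log y := by
      rw [hs, hδ]; simp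
    have h7 : 0 ≤ s * ZetaAsymptotics.termTSum s := by positivity
    have h8 : ∏ p ∈ Nat.primesLE y, (1 - f p)⁻¹ = ∏ p ∈ (y+1).primesBelow, (1 - f p)⁻¹ := rfl
    rw [h8, h1]
    linarith
  have hterm : ∀ p ∈ Nat.primesLE y, (0 < 1 - f p) ∧
      (1 - f p) ≤ (1 - 1 / (p:ℝ)) * Real.exp (2 * δ * (Real.log p / p)) := by
    intro p hp
    have hp2 : (2:ℝ) ≤ p := by exact_mod_cast Nat.two_le_of_mem_primesLE hp
    have hp0 : (0:ℝ) < p := by linarith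
    have hlp : 0 ≤ Real.log p := Real.log_natCast_nonneg p
    have e1 : f p = 1 / p * Real.exp (- (δ * Real.log p)) := by
      rw [hf, hs, neg_add, Real.rpow_add hp0, Real.rpow_neg_one, Real.rpow_def_of_pos hp0, one_div]
      congr 2
      ring
    have hinv : 1 / (p:ℝ) ≤ 1 / 2 := by gcongr
    have hinv0 : 0 < 1 / (p:ℝ) := by positivity
    have hu : 0 ≤ δ * Real.log p := by positivity
    constructor
    · rw [e1]
      have : Real.exp (- (δ * Real.log p)) ≤ 1 := Real.exp_le_one_iff.2 (by linarith)
      nlinarith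
    · have h1 : 1 - δ * Real.log p ≤ Real.exp (- (δ * Real.log p)) := by
        linarith [Real.add_one_le_exp (- (δ * Real.log p))]
      have h2 := Real.add_one_le_exp (2 * δ * (Real.log p / p))
      have h3 : 1 - f p ≤ 1 - 1 / p + 1 / p * (δ * Real.log p) := by
        rw [e1]; nlinarith
      have h4 : (1 - 1 / (p:ℝ)) * (2 * δ * (Real.log p / p) + 1) ≤
         (1 - 1 / (p:ℝ)) * Real.exp (2 * δ * (Real.log p / p)) :=
        mul_le_mul_of_nonneg_left h2 (by linarith)
      have h5 : 2 * δ * (Real.log p / p) = 2 * (1 / p * (δ * Real.log p)) := by ring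
      rw [h5] at h4 ⊢
      have h6 : 0 ≤ 1 / p * (δ * Real.log p) := by positivity
      nlinarith
  have hE : ∑ p ∈ Nat.primesLE y, 2 * δ * (Real.log p / p) ≤ 6 := by
    rw [← Finset.mul_sum]
    have h1 := aux_logsum y (by omega)
    have h2 : Real.log 4 ≤ 2 * Real.log y := by
      have : Real.log 4 = 2 * Real.log 2 := by
        rw [show (4:ℝ) = 2 ^ 2 by norm_num, Real.log_pow]; norm_num
      rw [this]
      have h1 : Real.log 2 ≤ Real.log y := Real.log_le_log (by norm_num) (by exact_mod_cast hy)
      linarith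
    calc 2 * δ * ∑ p ∈ Nat.primesLE y, Real.log p / p ≤ 2 * δ * (3 * Real.log y) := by
          gcongr; linarith
      _ = 6 := by rw [hδ]; field_simp; norm_num
  have hP : ∏ p ∈ Nat.primesLE y, (1 - f p) ≤
      (∏ p ∈ Nat.primesLE y, (1 - 1 / (p:ℝ))) * Real.exp 6 := by
    calc ∏ p ∈ Nat.primesLE y, (1 - f p) ≤ ∏ p ∈ Nat.primesLE y,
        ((1 - 1 / (p:ℝ)) * Real.exp (2 * δ * (Real.log p / p))) :=
          Finset.prod_le_prod (fun p hp => (hterm p hp).1.le) (fun p hp => (hterm p hp).2)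
      _ = (∏ p ∈ Nat.primesLE y, (1 - 1 / (p:ℝ))) *
          Real.exp (∑ p ∈ Nat.primesLE y, 2 * δ * (Real.log p / p)) := by
          rw [Finset.prod_mul_distrib, Real.exp_sum]
      _ ≤ _ := by
          apply mul_le_mul_of_nonneg_left (Real.exp_le_exp.2 hE)
          apply Finset.prod_nonneg
          intro p hp
          have hp2 : (1:ℝ) ≤ p := by exact_mod_cast (Nat.one_lt_of_mem_primesLE hp).le
          rw [sub_nonneg, div_le_one (by linarith)]
          exact hp2
  have hpos : 0 < ∏ p ∈ Nat.primesLE y, (1 - f p) := Finset.prod_pos (fun p hp => (hterm p hp).1)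
  rw [Finset.prod_inv_distrib] at hprod
  have h9 : 1 / (3 * Real.log y) ≤ ∏ p ∈ Nat.primesLE y, (1 - f p) := by
    have : (∏ p ∈ Nat.primesLE y, (1 - f p))⁻¹ ≤ 3 * Real.log y := by linarith
    rw [one_div]
    exact inv_le_of_inv_le₀ hpos this
  have h10 : Real.exp (-6) / 3 / Real.log y = 1 / (3 * Real.log y) * Real.exp (-6) := by
    field_simp
  rw [h10]
  calc 1 / (3 * Real.log y) * Real.exp (-6)
      ≤ ((∏ p ∈ Nat.primesLE y, (1 - 1 / (p:ℝ))) * Real.exp 6) * Real.exp (-6) := by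
        gcongr; linarith
    _ = _ := by rw [mul_assoc, ← Real.exp_add]; simp

theorem aux_noncyclic (n : ℕ) (hn : 0 < n) (h : ¬ IsCyclicNum n) :
    ∃ r, r.Prime ∧ r ∣ n ∧ (r ^ 2 ∣ n ∨ ∃ k, 0 < k ∧ r * (k * r + 1) ∣ n) := by
  have h1 : Nat.gcd n (Nat.totient n) ≠ 1 := fun h' => h ⟨hn, h'⟩
  obtain ⟨r, hr, hd⟩ := Nat.exists_prime_and_dvd h1
  have hrn : r ∣ n := hd.trans (Nat.gcd_dvd_left _ _)
  have hrt : r ∣ n.totient := hd.trans (Nat.gcd_dvd_right _ _)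
  refine ⟨r, hr, hrn, ?_⟩
  rw [Nat.totient_eq_prod_factorization hn.ne', Finsupp.prod, hr.prime.dvd_finsetProd_iff] at hrt
  obtain ⟨q, hq, hrq⟩ := hrt
  rw [Nat.support_factorization] at hq
  have hqp := Nat.prime_of_mem_primeFactors hq
  have hqn := Nat.dvd_of_mem_primeFactors hq
  rcases hr.dvd_mul.1 hrq with h2 | h2
  · left
    have hk : n.factorization q - 1 ≠ 0 := by
      intro h0
      rw [h0, pow_zero] at h2
      exact hr.one_lt.ne' (Nat.dvd_one.1 h2)
    have := hr.dvd_of_dvd_pow h2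
    rw [Nat.prime_dvd_prime_iff_eq hr hqp] at this
    subst this
    exact (pow_dvd_pow r (by omega)).trans (Nat.ordProj_dvd n r)
  · right
    obtain ⟨k, hk⟩ := h2
    have hq2 := hqp.two_le
    have hqe : q = k * r + 1 := by rw [mul_comm]; omega
    refine ⟨k, ?_, ?_⟩
    · rcases Nat.eq_zero_or_pos k with h0 | h0
      · subst h0; omega
      · exact h0
    · rw [← hqe]
      apply Nat.Coprime.mul_dvd_of_dvd_of_dvd _ hrn hqn
      rw [Nat.coprime_primes hr hqp]
      rintro rfl
      have := Nat.le_of_dvd (by omega) (Dvd.intro k hk.symm)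
      omega

theorem aux_bad (y N : ℕ) :
    (((Finset.Ioc 0 N).filter (fun n => (∀ p ∈ Nat.primesLE y, ¬ p ∣ n) ∧ ¬ IsCyclicNum n)).card : ℝ)
      ≤ N * (2 + Real.log N) * ∑ p ∈ (Finset.Ioc y N).filter Nat.Prime, 1 / (p:ℝ)^2 := by
  classical
  let A : ℕ → Finset ℕ := fun d => (Finset.Ioc 0 N).filter (fun n => d ∣ n)
  have hA : ∀ d : ℕ, ((A d).card : ℝ) ≤ N / d := by
    intro d
    simp only [A]
    rw [Nat.Ioc_filter_dvd_card_eq_div]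
    exact Nat.cast_div_le
  have hsub : (Finset.Ioc 0 N).filter (fun n => (∀ p ∈ Nat.primesLE y, ¬ p ∣ n) ∧ ¬ IsCyclicNum n)
      ⊆ ((Finset.Ioc y N).filter Nat.Prime).biUnion (fun r => A (r^2) ∪
        (Finset.Icc 1 N).biUnion (fun k => A (r * (k * r + 1)))) := by
    intro n hn
    simp only [Finset.mem_filter, Finset.mem_Ioc] at hn
    obtain ⟨⟨hn0, hnN⟩, hro, hnc⟩ := hn
    obtain ⟨r, hr, hrn, hor⟩ := aux_noncyclic n hn0 hnc
    simp only [Finset.mem_biUnion, Finset.mem_filter, Finset.mem_Ioc, Finset.mem_union, A,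
      Finset.mem_Icc]
    have hry : y < r := by
      by_contra hc
      exact hro r (Nat.mem_primesLE.2 ⟨by omega, hr⟩) hrn
    refine ⟨r, ⟨⟨hry, (Nat.le_of_dvd hn0 hrn).trans hnN⟩, hr⟩, ?_⟩
    rcases hor with h | ⟨k, hk, h⟩
    · left; exact ⟨⟨hn0, hnN⟩, h⟩
    · right
      refine ⟨k, ⟨hk, ?_⟩, ⟨hn0, hnN⟩, h⟩
      have h1 := Nat.le_of_dvd hn0 h
      have h2 := hr.pos
      nlinarith [Nat.mul_le_mul_left k h2, Nat.mul_le_mul_right (k*r+1) h2]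
  have hcard : (((Finset.Ioc 0 N).filter
      (fun n => (∀ p ∈ Nat.primesLE y, ¬ p ∣ n) ∧ ¬ IsCyclicNum n)).card : ℝ)
      ≤ ∑ r ∈ (Finset.Ioc y N).filter Nat.Prime, (((A (r^2)).card : ℝ) +
        ∑ k ∈ Finset.Icc 1 N, ((A (r * (k * r + 1))).card : ℝ)) := by
    have : ((Finset.Ioc 0 N).filter
      (fun n => (∀ p ∈ Nat.primesLE y, ¬ p ∣ n) ∧ ¬ IsCyclicNum n)).card
      ≤ ∑ r ∈ (Finset.Ioc y N).filter Nat.Prime, ((A (r^2)).card +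
        ∑ k ∈ Finset.Icc 1 N, (A (r * (k * r + 1))).card) := by
      refine (Finset.card_le_card hsub).trans (Finset.card_biUnion_le.trans ?_)
      apply Finset.sum_le_sum
      intro r _
      exact (Finset.card_union_le _ _).trans (Nat.add_le_add_left Finset.card_biUnion_le _)
    exact_mod_cast this
  refine hcard.trans ?_
  rw [Finset.mul_sum]
  apply Finset.sum_le_sum
  intro r hr
  have hrp : r.Prime := (Finset.mem_filter.1 hr).2
  have hr0 : (0:ℝ) < r := by exact_mod_cast hrp.pos
  have h1 : ((A (r^2)).card : ℝ) ≤ N * (1 / (r:ℝ)^2) := by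
    have := hA (r^2)
    push_cast at this
    rw [mul_one_div]; exact this
  have hh := harmonic_le_one_add_log N
  rw [harmonic_eq_sum_Icc] at hh
  push_cast at hh
  have h2 : ∑ k ∈ Finset.Icc 1 N, ((A (r * (k * r + 1))).card : ℝ) ≤
      N * (1 / (r:ℝ)^2) * ∑ k ∈ Finset.Icc 1 N, (k:ℝ)⁻¹ := by
    rw [Finset.mul_sum]
    apply Finset.sum_le_sum
    intro k hk
    have hk0 : (0:ℝ) < k := by exact_mod_cast (Finset.mem_Icc.1 hk).1
    refine (hA _).trans ?_
    push_cast
    calc (N:ℝ) / (r * (k * r + 1)) ≤ N / (r * (k * r)) := by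
          gcongr; linarith
      _ = _ := by field_simp
  have h3 : (N:ℝ) * (1 / (r:ℝ)^2) * ∑ k ∈ Finset.Icc 1 N, (k:ℝ)⁻¹
     ≤ (N:ℝ) * (1 / (r:ℝ)^2) * (1 + Real.log N) := by gcongr
  calc _ ≤ N * (1 / (r:ℝ)^2) + (N:ℝ) * (1 / (r:ℝ)^2) * (1 + Real.log N) := by linarith
    _ = _ := by ring

theorem aux_short (ε : ℝ) (h0 : 0 < ε) (h1 : ε < 1) :
    ∀ᶠ x : ℝ in atTop, ∃ n : ℕ, IsCyclicNum n ∧ (1 - ε) * x ≤ n ∧ (n:ℝ) ≤ x := by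
  classical
  have hK : 0 < Real.log 4 := Real.log_pos (by norm_num)
  set c : ℝ := Real.exp (-6) / 3 with hc
  have hc0 : 0 < c := by positivity
  set L : ℝ := 16 * Real.log 4 / (ε * c) with hL
  have hL0 : 0 < L := by positivity
  have hu : Tendsto (fun x : ℝ => L * Real.log x) atTop atTop :=
    Real.tendsto_log_atTop.const_mul_atTop hL0
  have ev1 := hu.eventually (Chebyshev.eventually_primeCounting_le (ε := 1) one_pos)
  have ev2 := (Real.tendsto_log_atTop.comp hu).eventually_ge_atTop (2 * L * (Real.log 4 + 1))
  have ev3 := hu.eventually_ge_atTop 2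
  have ev4 := Real.tendsto_log_atTop.eventually_ge_atTop 2
  have ev5 := (isLittleO_log_rpow_atTop (r := 1/2) (by norm_num)).bound
    (show 0 < ε * c / (8 * L) by positivity)
  filter_upwards [ev1, ev2, ev3, ev4, ev5, eventually_gt_atTop 1] with x e1 e2 e3 e4 e5 hx1
  have hx0 : 0 < x := by linarith
  by_contra hcon
  push Not at hcon
  set u : ℝ := L * Real.log x with hudef
  set y : ℕ := ⌊u⌋₊ with hy
  have hy2 : 2 ≤ y := Nat.le_floor (by exact_mod_cast e3)
  have hyu : (y:ℝ) ≤ u := Nat.floor_le (by linarith)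
  have hyl : u / 2 ≤ y := by
    have := Nat.lt_floor_add_one u
    rw [← hy] at this
    linarith
  have hy0 : (0:ℝ) < y := by positivity
  have hly : 0 < Real.log y := Real.log_pos (by exact_mod_cast hy2)
  set V : ℝ := ∏ p ∈ Nat.primesLE y, (1 - 1 / (p:ℝ)) with hV
  have hVl : c / Real.log y ≤ V := aux_mertens y hy2
  have hpr : ∀ p ∈ Nat.primesLE y, p.Prime := fun p hp => Nat.prime_of_mem_primesLE hp
  have l1 := aux_legendre (Nat.primesLE y) hpr x hx0.le
  have l2 := aux_legendre (Nat.primesLE y) hpr ((1-ε) * x) (mul_nonneg (by linarith) hx0.le)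
  have hbad := aux_bad y ⌊x⌋₊
  have hsq := aux_sqsum y hy2 ⌊x⌋₊
  rw [← hV, Nat.primesLE_card_eq_primeCounting] at l1 l2
  rw [abs_le] at l1 l2
  have hsub : (Finset.Ioc 0 ⌊x⌋₊).filter (fun n => ∀ p ∈ Nat.primesLE y, ¬ p ∣ n) ⊆
      (Finset.Ioc 0 ⌊(1-ε)*x⌋₊).filter (fun n => ∀ p ∈ Nat.primesLE y, ¬ p ∣ n) ∪
      (Finset.Ioc 0 ⌊x⌋₊).filter
        (fun n => (∀ p ∈ Nat.primesLE y, ¬ p ∣ n) ∧ ¬ IsCyclicNum n) := by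
    intro n hn
    simp only [Finset.mem_union, Finset.mem_filter, Finset.mem_Ioc] at hn ⊢
    obtain ⟨⟨hn0, hnx⟩, hr⟩ := hn
    by_cases hcy : IsCyclicNum n
    · left
      refine ⟨⟨hn0, ?_⟩, hr⟩
      have hnx' : (n:ℝ) ≤ x := (Nat.le_floor_iff hx0.le).1 hnx
      by_contra hlt
      have := Nat.lt_of_floor_lt (not_le.1 hlt)
      linarith [hcon n hcy this.le]
    · right; exact ⟨⟨hn0, hnx⟩, hr, hcy⟩
  have hcard := (Finset.card_le_card hsub).trans (Finset.card_union_le _ _)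
  have hcard' : (((Finset.Ioc 0 ⌊x⌋₊).filter (fun n => ∀ p ∈ Nat.primesLE y, ¬ p ∣ n)).card : ℝ) ≤
      (((Finset.Ioc 0 ⌊(1-ε)*x⌋₊).filter (fun n => ∀ p ∈ Nat.primesLE y, ¬ p ∣ n)).card : ℝ) +
      (((Finset.Ioc 0 ⌊x⌋₊).filter
        (fun n => (∀ p ∈ Nat.primesLE y, ¬ p ∣ n) ∧ ¬ IsCyclicNum n)).card : ℝ) := by
    exact_mod_cast hcard
  have hNx : (⌊x⌋₊ : ℝ) ≤ x := Nat.floor_le hx0.le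
  have hN1 : (1:ℝ) ≤ ⌊x⌋₊ := by exact_mod_cast Nat.le_floor (by exact_mod_cast hx1.le)
  have hlogN : Real.log ⌊x⌋₊ ≤ Real.log x := Real.log_le_log (by linarith) hNx
  have hlogN0 : 0 ≤ Real.log ⌊x⌋₊ := Real.log_nonneg hN1
  have hB : (⌊x⌋₊ : ℝ) * (2 + Real.log ⌊x⌋₊) *
      ∑ p ∈ (Finset.Ioc y ⌊x⌋₊).filter Nat.Prime, 1 / (p:ℝ)^2 ≤ ε * c / 2 * x / Real.log y := by
    calc _ ≤ x * (2 * Real.log x) * (2 * Real.log 4 / (y * Real.log y)) := by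
          gcongr
          linarith
      _ ≤ x * (2 * Real.log x) * (2 * Real.log 4 / (u / 2 * Real.log y)) := by
          gcongr
      _ = _ := by
          rw [hudef, hL]
          have : Real.log x ≠ 0 := by linarith
          field_simp
          norm_num
  have hVx : ε * x * (c / Real.log y) ≤ ε * x * V := by gcongr
  have hlog_u : Real.log u ≥ 2 * L * (Real.log 4 + 1) := e2
  have hpi : (Nat.primeCounting y : ℝ) ≤ Real.log x / 2 := by
    refine e1.trans ?_
    have hp : 0 < 2 * L * (Real.log 4 + 1) := by positivity
    have hlx : 0 < Real.log x := by linarith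
    calc (Real.log 4 + 1) * u / Real.log u ≤ (Real.log 4 + 1) * u / (2 * L * (Real.log 4 + 1)) := by
          gcongr
      _ = _ := by
          rw [hudef]
          have : Real.log 4 + 1 ≠ 0 := by positivity
          field_simp
  have hpow : (2:ℝ) ^ Nat.primeCounting y ≤ x ^ (1/2 : ℝ) := by
    calc (2:ℝ) ^ Nat.primeCounting y ≤ (Real.exp 1) ^ Nat.primeCounting y := by
          gcongr
          linarith [Real.add_one_le_exp 1]
      _ = Real.exp (Nat.primeCounting y) := by rw [← Real.exp_nat_mul, mul_one]
      _ ≤ Real.exp (Real.log x / 2) := Real.exp_le_exp.2 hpi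
      _ = x ^ (1/2 : ℝ) := by rw [Real.rpow_def_of_pos hx0]; ring_nf
  have hxx : x ^ (1/2 : ℝ) * x ^ (1/2 : ℝ) = x := by
    rw [← Real.rpow_add hx0]; norm_num
  have hxp : 0 < x ^ (1/2 : ℝ) := by positivity
  rw [Real.norm_of_nonneg (by linarith), Real.norm_of_nonneg hxp.le] at e5
  have hlyu : Real.log y < u := by
    have := Real.log_le_sub_one_of_pos hy0
    linarith
  have hfin : 2 * (2:ℝ) ^ Nat.primeCounting y < ε * c / 2 * x / Real.log y := by
    rw [lt_div_iff₀ hly]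
    calc 2 * (2:ℝ) ^ Nat.primeCounting y * Real.log y
        < 2 * (2:ℝ) ^ Nat.primeCounting y * u := by gcongr
      _ ≤ 2 * x ^ (1/2:ℝ) * (L * (ε * c / (8 * L) * x ^ (1/2:ℝ))) := by
          rw [hudef]; gcongr
      _ = ε * c / 4 * (x ^ (1/2:ℝ) * x ^ (1/2:ℝ)) := by field_simp; norm_num
      _ ≤ ε * c / 2 * x := by rw [hxx]; gcongr; norm_num
  have e7 : ε * x * (c / Real.log y) = ε * c / 2 * x / Real.log y + ε * c / 2 * x / Real.log y := by
    ring
  linarith [l1.1, l2.2]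

theorem aux_inf : (Set.ofPred IsCyclicNum).Infinite := by
  apply Nat.infinite_setOfPred_prime.mono
  intro p hp
  have hp' : p.Prime := hp
  refine ⟨hp'.pos, ?_⟩
  rw [Nat.totient_prime hp']
  exact (Nat.coprime_self_sub_right hp'.one_le).2 (Nat.coprime_one_right p)

theorem aux_count (x : ℝ) : cyclicCount x = Nat.count IsCyclicNum (⌊x⌋₊ + 1) := by
  rw [Nat.count_eq_card_filter_range, cyclicCount]

theorem aux_nth (x : ℝ) (hx : 0 ≤ x) (n : ℕ) (hn : IsCyclicNum n) (hnx : (n:ℝ) ≤ x) :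
    n ≤ cyclicNum (cyclicCount x) ∧ (cyclicNum (cyclicCount x) : ℝ) ≤ x := by
  have h1 : n < ⌊x⌋₊ + 1 := Nat.lt_succ_of_le (Nat.le_floor hnx)
  have h2 := Nat.count_strict_mono hn h1
  rw [aux_count, cyclicNum]
  constructor
  · calc n = Nat.nth IsCyclicNum (Nat.count IsCyclicNum n) := (Nat.nth_count hn).symm
      _ ≤ _ := Nat.nth_monotone aux_inf (by omega)
  · have h3 : Nat.nth IsCyclicNum (Nat.count IsCyclicNum (⌊x⌋₊ + 1) - 1) < ⌊x⌋₊ + 1 :=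
      Nat.nth_lt_of_lt_count (by omega)
    exact (Nat.le_floor_iff hx).1 (Nat.le_of_lt_succ h3)

theorem div_cyclicNum_cyclicCount_tendsto_one :
    Tendsto (fun x : ℝ => x / (cyclicNum (cyclicCount x) : ℝ)) atTop (nhds 1) := by
  rw [Metric.tendsto_nhds]
  intro η hη
  have hε0 : 0 < η / (2 + η) := by positivity
  have hε1 : η / (2 + η) < 1 := by rw [div_lt_one (by positivity)]; linarith
  filter_upwards [aux_short _ hε0 hε1, eventually_gt_atTop 0] with x ⟨n, hn, hn1, hn2⟩ hx
  obtain ⟨h1, h2⟩ := aux_nth x hx.le n hn hn2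
  have h3 : (n:ℝ) ≤ cyclicNum (cyclicCount x) := by exact_mod_cast h1
  set C : ℝ := (cyclicNum (cyclicCount x) : ℝ)
  have h4 : (1 - η / (2 + η)) * x ≤ C := hn1.trans h3
  have h5 : 1 - η / (2 + η) = 2 / (2 + η) := by field_simp; ring
  rw [h5] at h4
  have hC : 0 < C := lt_of_lt_of_le (by positivity) h4
  rw [div_mul_eq_mul_div, div_le_iff₀ (by positivity)] at h4
  have h6 : 1 ≤ x / C := by rw [one_le_div hC]; exact h2
  have h7 : x / C < 1 + η := by
    rw [div_lt_iff₀ hC]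
    nlinarith [mul_pos hη hC]
  rw [Real.dist_eq, abs_lt]
  constructor <;> linarith
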